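/- Suppose T is Σ1-sound. For each m ≥ 1, there exists no Σ1 provability predicate PR_T(x) of T such that the modal formula p → □ᵐp belongs to PL(PR_T). -/

import Mathlib

namespace PLN

/-! ### Modal formulas and the logics N⁺A_{m,n} -/

/-- Formulas of modal propositional logic. -/
inductive MFml : Type
  | var : ℕ → MFml
  | bot : MFml
  | neg : MFml → MFml
  | and : MFml → MFml → MFml
  | or : MFml → MFml → MFml
  | imp : MFml → MFml → MFml
  | box : MFml → MFml
  deriving DecidableEq

/-- `boxIter n A` is `□ⁿ A`, where `□⁰ A = A` and `□^(k+1) A = □ (□ᵏ A)`. -/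
def boxIter : ℕ → MFml → MFml
  | 0, A => A
  | k + 1, A => .box (boxIter k A)

/-- Evaluation of a modal formula under a valuation of its "propositional atoms"
(propositional variables, and boxed formulas); used to define propositional tautologies
in the modal language. -/
def MFml.evalTC (v : MFml → Prop) : MFml → Prop
  | .bot => False
  | .neg A => ¬ A.evalTC v
  | .and A B => A.evalTC v ∧ B.evalTC v
  | .or A B => A.evalTC v ∨ B.evalTC v
  | .imp A B => A.evalTC v → B.evalTC v
  | A => v A

/-- Propositional tautologies in the modal language. -/
def MTaut (A : MFml) : Prop := ∀ v, A.evalTC v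

/-- Provability in the logic `N⁺A_{m,n}`: the pure logic of necessitation `N`
(propositional tautologies, modus ponens, necessitation) together with the axiom scheme
`□ⁿA → □ᵐA` and the rule `Ros□` (from `¬□A` infer `¬□□A`). -/
inductive NAProves (m n : ℕ) : MFml → Prop
  | taut {A} : MTaut A → NAProves m n A
  | acc (A) : NAProves m n (.imp (boxIter n A) (boxIter m A))
  | mp {A B} : NAProves m n (.imp A B) → NAProves m n A → NAProves m n B
  | nec {A} : NAProves m n A → NAProves m n (.box A)
  | ros {A} : NAProves m n (.neg (.box A)) → NAProves m n (.neg (.box (.box A)))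

/-- `IsSub B A` : `B` is a subformula of `A`. -/
inductive IsSub : MFml → MFml → Prop
  | refl (A) : IsSub A A
  | neg {B A} : IsSub B A → IsSub B (.neg A)
  | andL {B A C} : IsSub B A → IsSub B (.and A C)
  | andR {B A C} : IsSub B C → IsSub B (.and A C)
  | orL {B A C} : IsSub B A → IsSub B (.or A C)
  | orR {B A C} : IsSub B C → IsSub B (.or A C)
  | impL {B A C} : IsSub B A → IsSub B (.imp A C)
  | impR {B A C} : IsSub B C → IsSub B (.imp A C)
  | box {B A} : IsSub B A → IsSub B (.box A)

/-! ### N-frames and N-models -/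

/-- An N-model on a set `W` of worlds: an N-frame (a binary relation `≺_B` on `W`
for each modal formula `B`) together with a valuation of propositional variables. -/
structure NModel (W : Type) where
  rel : MFml → W → W → Prop
  val : W → ℕ → Prop

/-- The forcing relation of an N-model:
`x ⊩ □B` iff every `y` with `x ≺_B y` satisfies `y ⊩ B`. -/
def NModel.Forces {W : Type} (M : NModel W) : W → MFml → Prop
  | x, .var p => M.val x p
  | _, .bot => False
  | x, .neg A => ¬ NModel.Forces M x A
  | x, .and A B => NModel.Forces M x A ∧ NModel.Forces M x B
  | x, .or A B => NModel.Forces M x A ∨ NModel.Forces M x B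
  | x, .imp A B => NModel.Forces M x A → NModel.Forces M x B
  | x, .box A => ∀ y, M.rel A x y → NModel.Forces M y A

/-- The relations `≺_B^k` : `x ≺_B^0 y` iff `x = y`, and
`x ≺_B^(k+1) y` iff `∃ w, x ≺_{□ᵏB} w` and `w ≺_B^k y`. -/
def NModel.relIter {W : Type} (M : NModel W) (B : MFml) : ℕ → W → W → Prop
  | 0, x, y => x = y
  | k + 1, x, y => ∃ w, M.rel (boxIter k B) x w ∧ NModel.relIter M B k w y

/-- `(m,n)`-accessibility of (the frame of) an N-model. -/
def NModel.Accessible {W : Type} (M : NModel W) (m n : ℕ) : Prop :=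
  ∀ (B : MFml) (x y : W), NModel.relIter M B m x y → NModel.relIter M B n x y

/-! ### The language of first-order arithmetic -/

/-- Terms of the language of arithmetic, with de Bruijn variables. -/
inductive ATerm : Type
  | var : ℕ → ATerm
  | zero : ATerm
  | succ : ATerm → ATerm
  | add : ATerm → ATerm → ATerm
  | mul : ATerm → ATerm → ATerm
  deriving DecidableEq

/-- Formulas of the language of arithmetic (with `≤` primitive), de Bruijn variables. -/
inductive AFml : Type
  | eq : ATerm → ATerm → AFml
  | le : ATerm → ATerm → AFml
  | neg : AFml → AFml
  | and : AFml → AFml → AFml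
  | or : AFml → AFml → AFml
  | imp : AFml → AFml → AFml
  | all : AFml → AFml
  | ex : AFml → AFml
  deriving DecidableEq

/-- Lift (shift up by one) the variables `≥ c` of a term. -/
def ATerm.lift (c : ℕ) : ATerm → ATerm
  | .var n => .var (if n < c then n else n + 1)
  | .zero => .zero
  | .succ t => .succ (t.lift c)
  | .add t s => .add (t.lift c) (s.lift c)
  | .mul t s => .mul (t.lift c) (s.lift c)

/-- Simultaneous substitution in terms. -/
def ATerm.substAll (σ : ℕ → ATerm) : ATerm → ATerm
  | .var n => σ n
  | .zero => .zero
  | .succ t => .succ (t.substAll σ)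
  | .add t s => .add (t.substAll σ) (s.substAll σ)
  | .mul t s => .mul (t.substAll σ) (s.substAll σ)

/-- Pushing a substitution under a binder. -/
def liftSub (σ : ℕ → ATerm) : ℕ → ATerm
  | 0 => .var 0
  | n + 1 => (σ n).lift 0

/-- Lift (shift up by one) the free variables `≥ c` of a formula. -/
def AFml.lift (c : ℕ) : AFml → AFml
  | .eq t s => .eq (t.lift c) (s.lift c)
  | .le t s => .le (t.lift c) (s.lift c)
  | .neg φ => .neg (φ.lift c)
  | .and φ ψ => .and (φ.lift c) (ψ.lift c)
  | .or φ ψ => .or (φ.lift c) (ψ.lift c)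
  | .imp φ ψ => .imp (φ.lift c) (ψ.lift c)
  | .all φ => .all (φ.lift (c + 1))
  | .ex φ => .ex (φ.lift (c + 1))

/-- Simultaneous (capture-avoiding) substitution in formulas. -/
def AFml.substAll (σ : ℕ → ATerm) : AFml → AFml
  | .eq t s => .eq (t.substAll σ) (s.substAll σ)
  | .le t s => .le (t.substAll σ) (s.substAll σ)
  | .neg φ => .neg (φ.substAll σ)
  | .and φ ψ => .and (φ.substAll σ) (ψ.substAll σ)
  | .or φ ψ => .or (φ.substAll σ) (ψ.substAll σ)
  | .imp φ ψ => .imp (φ.substAll σ) (ψ.substAll σ)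
  | .all φ => .all (φ.substAll (liftSub σ))
  | .ex φ => .ex (φ.substAll (liftSub σ))

def subst0Env (t : ATerm) : ℕ → ATerm
  | 0 => t
  | n + 1 => .var n

def subst2Env (t s : ATerm) : ℕ → ATerm
  | 0 => t
  | 1 => s
  | n + 2 => .var n

/-- Substitute the term `t` for the free variable `0` (decrementing other variables). -/
def AFml.subst0 (φ : AFml) (t : ATerm) : AFml := φ.substAll (subst0Env t)

/-- Substitute the terms `t`, `s` for the free variables `0`, `1` simultaneously. -/
def AFml.subst2 (φ : AFml) (t s : ATerm) : AFml := φ.substAll (subst2Env t s)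

/-- Substitute `S(var 0)` for `var 0`, leaving all other free variables unchanged. -/
def succSubst (φ : AFml) : AFml :=
  φ.substAll fun n => if n = 0 then .succ (.var 0) else .var n

/-- All variables of a term are `< c`. -/
def ATerm.FreeLt (c : ℕ) : ATerm → Prop
  | .var n => n < c
  | .zero => True
  | .succ t => t.FreeLt c
  | .add t s => t.FreeLt c ∧ s.FreeLt c
  | .mul t s => t.FreeLt c ∧ s.FreeLt c

/-- All free variables of a formula are `< c`; `FreeLt 0 φ` says that `φ` is a sentence. -/
def AFml.FreeLt (c : ℕ) : AFml → Prop
  | .eq t s => t.FreeLt c ∧ s.FreeLt c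
  | .le t s => t.FreeLt c ∧ s.FreeLt c
  | .neg φ => φ.FreeLt c
  | .and φ ψ => φ.FreeLt c ∧ ψ.FreeLt c
  | .or φ ψ => φ.FreeLt c ∧ ψ.FreeLt c
  | .imp φ ψ => φ.FreeLt c ∧ ψ.FreeLt c
  | .all φ => φ.FreeLt (c + 1)
  | .ex φ => φ.FreeLt (c + 1)

/-- The numeral `n̄`. -/
def numeral : ℕ → ATerm
  | 0 => .zero
  | n + 1 => .succ (numeral n)

/-- A Gödel numbering of terms. -/
def ATerm.code : ATerm → ℕ
  | .var n => Nat.pair 0 n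
  | .zero => Nat.pair 1 0
  | .succ t => Nat.pair 2 t.code
  | .add t s => Nat.pair 3 (Nat.pair t.code s.code)
  | .mul t s => Nat.pair 4 (Nat.pair t.code s.code)

/-- A Gödel numbering of formulas. -/
def AFml.code : AFml → ℕ
  | .eq t s => Nat.pair 0 (Nat.pair t.code s.code)
  | .le t s => Nat.pair 1 (Nat.pair t.code s.code)
  | .neg φ => Nat.pair 2 φ.code
  | .and φ ψ => Nat.pair 3 (Nat.pair φ.code ψ.code)
  | .or φ ψ => Nat.pair 4 (Nat.pair φ.code ψ.code)
  | .imp φ ψ => Nat.pair 5 (Nat.pair φ.code ψ.code)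
  | .all φ => Nat.pair 6 φ.code
  | .ex φ => Nat.pair 7 φ.code

/-- `⌜φ⌝`, the numeral of the Gödel number of `φ`. -/
def gnum (φ : AFml) : ATerm := numeral φ.code

/-- For a formula `P(x)` (with free variable `var 0`), `P.appNum φ` is `P(⌜φ⌝)`. -/
def AFml.appNum (P φ : AFml) : AFml := P.subst0 (gnum φ)

/-- Iterated application of a predicate: `iterPred P k φ = P(⌜P(⌜⋯P(⌜φ⌝)⋯⌝)⌝)` (`k` times). -/
def iterPred (P : AFml) : ℕ → AFml → AFml
  | 0, φ => φ
  | k + 1, φ => P.appNum (iterPred P k φ)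

/-! ### Satisfaction in the standard model -/

def ATerm.val (ρ : ℕ → ℕ) : ATerm → ℕ
  | .var n => ρ n
  | .zero => 0
  | .succ t => t.val ρ + 1
  | .add t s => t.val ρ + s.val ρ
  | .mul t s => t.val ρ * s.val ρ

def consEnv (a : ℕ) (ρ : ℕ → ℕ) : ℕ → ℕ
  | 0 => a
  | n + 1 => ρ n

/-- Satisfaction in the standard model `ℕ` under an environment `ρ`. -/
def AFml.Sat (ρ : ℕ → ℕ) : AFml → Prop
  | .eq t s => t.val ρ = s.val ρ
  | .le t s => t.val ρ ≤ s.val ρ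
  | .neg φ => ¬ φ.Sat ρ
  | .and φ ψ => φ.Sat ρ ∧ ψ.Sat ρ
  | .or φ ψ => φ.Sat ρ ∨ ψ.Sat ρ
  | .imp φ ψ => φ.Sat ρ → ψ.Sat ρ
  | .all φ => ∀ a, φ.Sat (consEnv a ρ)
  | .ex φ => ∃ a, φ.Sat (consEnv a ρ)

/-- `ℕ ⊨ φ`. -/
def TrueN (φ : AFml) : Prop := φ.Sat fun _ => 0

/-! ### The arithmetical hierarchy: Δ₀, Σ₁, Π₁ -/

/-- `Δ₀` formulas: every quantifier is bounded. -/
inductive IsDelta0 : AFml → Prop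
  | eq (t s : ATerm) : IsDelta0 (.eq t s)
  | le (t s : ATerm) : IsDelta0 (.le t s)
  | neg {φ} : IsDelta0 φ → IsDelta0 (.neg φ)
  | and {φ ψ} : IsDelta0 φ → IsDelta0 ψ → IsDelta0 (.and φ ψ)
  | or {φ ψ} : IsDelta0 φ → IsDelta0 ψ → IsDelta0 (.or φ ψ)
  | imp {φ ψ} : IsDelta0 φ → IsDelta0 ψ → IsDelta0 (.imp φ ψ)
  | ball {φ : AFml} (t : ATerm) : IsDelta0 φ → IsDelta0 (.all (.imp (.le (.var 0) (ATerm.lift 0 t)) φ))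
  | bex {φ : AFml} (t : ATerm) : IsDelta0 φ → IsDelta0 (.ex (.and (.le (.var 0) (ATerm.lift 0 t)) φ))

mutual
  /-- `Σ₁` formulas. -/
  inductive IsSigma1 : AFml → Prop
    | delta0 {φ} : IsDelta0 φ → IsSigma1 φ
    | and {φ ψ} : IsSigma1 φ → IsSigma1 ψ → IsSigma1 (.and φ ψ)
    | or {φ ψ} : IsSigma1 φ → IsSigma1 ψ → IsSigma1 (.or φ ψ)
    | ex {φ} : IsSigma1 φ → IsSigma1 (.ex φ)
    | negPi {φ} : IsPi1 φ → IsSigma1 (.neg φ)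
    | impPiSigma {φ ψ} : IsPi1 φ → IsSigma1 ψ → IsSigma1 (.imp φ ψ)
  /-- `Π₁` formulas. -/
  inductive IsPi1 : AFml → Prop
    | delta0 {φ} : IsDelta0 φ → IsPi1 φ
    | and {φ ψ} : IsPi1 φ → IsPi1 ψ → IsPi1 (.and φ ψ)
    | or {φ ψ} : IsPi1 φ → IsPi1 ψ → IsPi1 (.or φ ψ)
    | all {φ} : IsPi1 φ → IsPi1 (.all φ)
    | negSigma {φ} : IsSigma1 φ → IsPi1 (.neg φ)
    | impSigmaPi {φ ψ} : IsSigma1 φ → IsPi1 ψ → IsPi1 (.imp φ ψ)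
end

/-! ### A Hilbert-style proof system for first-order arithmetic -/

/-- Evaluation of an arithmetical formula under a valuation of its "propositionally atomic"
subformulas (atomic or quantified formulas); used for propositional tautologies and
tautological consequence. -/
def AFml.evalProp (v : AFml → Prop) : AFml → Prop
  | .neg φ => ¬ φ.evalProp v
  | .and φ ψ => φ.evalProp v ∧ ψ.evalProp v
  | .or φ ψ => φ.evalProp v ∨ ψ.evalProp v
  | .imp φ ψ => φ.evalProp v → ψ.evalProp v
  | φ => v φ

/-- Propositional tautologies in the language of arithmetic. -/
def ATaut (φ : AFml) : Prop := ∀ v, φ.evalProp v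

/-- `φ` is a tautological consequence of the set `X` of formulas. -/
def TC (X : Set AFml) (φ : AFml) : Prop :=
  ∀ v : AFml → Prop, (∀ ψ ∈ X, ψ.evalProp v) → φ.evalProp v

def iffF (φ ψ : AFml) : AFml := .and (.imp φ ψ) (.imp ψ φ)

/-- Hilbert-style provability from the set of axioms `Γ` in classical first-order
logic with equality. -/
inductive Proves (Γ : Set AFml) : AFml → Prop
  | ax {φ} : φ ∈ Γ → Proves Γ φ
  | taut {φ} : ATaut φ → Proves Γ φ
  | mp {φ ψ} : Proves Γ (.imp φ ψ) → Proves Γ φ → Proves Γ ψ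
  | allE (φ : AFml) (t : ATerm) : Proves Γ (.imp (.all φ) (φ.subst0 t))
  | exI (φ : AFml) (t : ATerm) : Proves Γ (.imp (φ.subst0 t) (.ex φ))
  | allImp (φ ψ : AFml) : Proves Γ (.imp (.all (.imp φ ψ)) (.imp (.all φ) (.all ψ)))
  | vacAll (φ : AFml) : Proves Γ (.imp φ (.all (AFml.lift 0 φ)))
  | exDef (φ : AFml) : Proves Γ (iffF (.ex φ) (.neg (.all (.neg φ))))
  | gen {φ} : Proves Γ φ → Proves Γ (.all φ)
  | eqRefl (t : ATerm) : Proves Γ (.eq t t)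
  | eqSubst (φ : AFml) (t s : ATerm) : Proves Γ (.imp (.eq t s) (.imp (φ.subst0 t) (φ.subst0 s)))

/-! ### Peano arithmetic -/

/-- The axioms of Peano arithmetic. -/
inductive PAax : AFml → Prop
  | succNeZero : PAax (.all (.neg (.eq (.succ (.var 0)) .zero)))
  | succInj :
      PAax (.all (.all (.imp (.eq (.succ (.var 1)) (.succ (.var 0))) (.eq (.var 1) (.var 0)))))
  | addZero : PAax (.all (.eq (.add (.var 0) .zero) (.var 0)))
  | addSucc :
      PAax (.all (.all (.eq (.add (.var 1) (.succ (.var 0))) (.succ (.add (.var 1) (.var 0))))))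
  | mulZero : PAax (.all (.eq (.mul (.var 0) .zero) .zero))
  | mulSucc :
      PAax (.all (.all (.eq (.mul (.var 1) (.succ (.var 0)))
        (.add (.mul (.var 1) (.var 0)) (.var 1)))))
  | leDef :
      PAax (.all (.all (iffF (.le (.var 1) (.var 0))
        (.ex (.eq (.add (.var 0) (.var 2)) (.var 1))))))
  | ind (φ : AFml) :
      PAax (.imp (.and (φ.subst0 .zero) (.all (.imp φ (succSubst φ)))) (.all φ))

/-- Peano arithmetic, as a set of axioms. -/
def PA : Set AFml := {φ | PAax φ}

/-- The sentence `0 = 1`. -/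
def botFml : AFml := .eq .zero (.succ .zero)

/-- `t < s`, as the formula `S(t) ≤ s`. -/
def ltF (t s : ATerm) : AFml := .le (.succ t) s

/-- `Δ₁(PA)` formulas: `Σ₁` formulas which are `PA`-provably equivalent to a `Π₁` formula. -/
def IsDelta1PA (φ : AFml) : Prop :=
  IsSigma1 φ ∧ ∃ ψ, IsPi1 ψ ∧ Proves PA (iffF φ ψ)

/-! ### Theories, provability predicates, arithmetical interpretations -/

/-- `Tax` is primitive recursively axiomatized (via the Gödel numbering). -/
def PrAxiomatized (Tax : Set AFml) : Prop :=
  ∃ p : ℕ → Bool, Primrec p ∧ ∀ φ : AFml, φ ∈ Tax ↔ p φ.code = true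

/-- `Σ₁`-soundness: every `T`-provable `Σ₁` sentence is true in `ℕ`. -/
def Sigma1Sound (Tax : Set AFml) : Prop :=
  ∀ φ : AFml, IsSigma1 φ → φ.FreeLt 0 → Proves Tax φ → TrueN φ

/-- `P` is a provability predicate of `T`: a formula `P(x)` with at most the free
variable `x` such that for every formula `φ`, `T ⊢ φ` iff `PA ⊢ P(⌜φ⌝)`. -/
def IsProvPred (Tax : Set AFml) (P : AFml) : Prop :=
  P.FreeLt 1 ∧ ∀ φ : AFml, Proves Tax φ ↔ Proves PA (P.appNum φ)

/-- `f` is an arithmetical interpretation based on the predicate `P`. -/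
def IsInterp (P : AFml) (f : MFml → AFml) : Prop :=
  (∀ i, (f (.var i)).FreeLt 0) ∧
  f .bot = botFml ∧
  (∀ A, f (.neg A) = .neg (f A)) ∧
  (∀ A B, f (.and A B) = .and (f A) (f B)) ∧
  (∀ A B, f (.or A B) = .or (f A) (f B)) ∧
  (∀ A B, f (.imp A B) = .imp (f A) (f B)) ∧
  (∀ A, f (.box A) = P.appNum (f A))

/-- The provability logic of the predicate `P` (relative to the theory `Tax`). -/
def PL (Tax : Set AFml) (P : AFml) : Set MFml :=
  {A | ∀ f : MFml → AFml, IsInterp P f → Proves Tax (f A)}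

/-- The formulas with a `T`-proof of code `≤ s` (relative to a proof enumeration `prf`). -/
def PTset (prf : ℕ → Option AFml) (s : ℕ) : Set AFml :=
  {φ | ∃ y ≤ s, prf y = some φ}

/-! ### Substitution lemmas -/

lemma numeral_lift (n c : ℕ) : (numeral n).lift c = numeral n := by
  induction n with
  | zero => rfl
  | succ k ih => simp [numeral, ATerm.lift, ih]

lemma numeral_subst (n : ℕ) (σ : ℕ → ATerm) : (numeral n).substAll σ = numeral n := by
  induction n with
  | zero => rfl
  | succ k ih => simp [numeral, ATerm.substAll, ih]

lemma numeral_val (n : ℕ) (ρ : ℕ → ℕ) : (numeral n).val ρ = n := by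
  induction n with
  | zero => rfl
  | succ k ih => simp [numeral, ATerm.val, ih]

lemma numeral_freeLt (n c : ℕ) : (numeral n).FreeLt c := by
  induction n with
  | zero => trivial
  | succ k ih => simpa [numeral, ATerm.FreeLt] using ih

lemma lift_substAll (t : ATerm) (τ : ℕ → ATerm) :
    (t.lift 0).substAll (liftSub τ) = (t.substAll τ).lift 0 := by
  induction t with
  | var n => simp [ATerm.lift, ATerm.substAll, liftSub]
  | zero => rfl
  | succ t ih => simp [ATerm.lift, ATerm.substAll, ih]
  | add t s ih1 ih2 => simp [ATerm.lift, ATerm.substAll, ih1, ih2]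
  | mul t s ih1 ih2 => simp [ATerm.lift, ATerm.substAll, ih1, ih2]

lemma lift_subst0 (t s : ATerm) : (t.lift 0).substAll (subst0Env s) = t := by
  induction t with
  | var n => simp [ATerm.lift, ATerm.substAll, subst0Env]
  | zero => rfl
  | succ t ih => simp [ATerm.lift, ATerm.substAll, ih]
  | add t s ih1 ih2 => simp [ATerm.lift, ATerm.substAll, ih1, ih2]
  | mul t s ih1 ih2 => simp [ATerm.lift, ATerm.substAll, ih1, ih2]

lemma term_comp (t : ATerm) (σ τ : ℕ → ATerm) :
    (t.substAll σ).substAll τ = t.substAll (fun n => (σ n).substAll τ) := by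
  induction t with
  | var n => rfl
  | zero => rfl
  | succ t ih => simp [ATerm.substAll, ih]
  | add t s ih1 ih2 => simp [ATerm.substAll, ih1, ih2]
  | mul t s ih1 ih2 => simp [ATerm.substAll, ih1, ih2]

lemma liftSub_comp (σ τ : ℕ → ATerm) :
    (fun n => (liftSub σ n).substAll (liftSub τ)) = liftSub (fun n => (σ n).substAll τ) := by
  funext n
  cases n with
  | zero => rfl
  | succ n => exact lift_substAll _ _

lemma fml_comp (φ : AFml) (σ τ : ℕ → ATerm) :
    (φ.substAll σ).substAll τ = φ.substAll (fun n => (σ n).substAll τ) := by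
  induction φ generalizing σ τ with
  | eq t s => simp [AFml.substAll, term_comp]
  | le t s => simp [AFml.substAll, term_comp]
  | neg φ ih => simp [AFml.substAll, ih]
  | and φ ψ ih1 ih2 => simp [AFml.substAll, ih1, ih2]
  | or φ ψ ih1 ih2 => simp [AFml.substAll, ih1, ih2]
  | imp φ ψ ih1 ih2 => simp [AFml.substAll, ih1, ih2]
  | all φ ih => simp [AFml.substAll, ih, liftSub_comp]
  | ex φ ih => simp [AFml.substAll, ih, liftSub_comp]

lemma term_subst_congr (t : ATerm) (c : ℕ) (h : t.FreeLt c) (σ τ : ℕ → ATerm)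
    (hs : ∀ n < c, σ n = τ n) : t.substAll σ = t.substAll τ := by
  induction t with
  | var n => exact hs n h
  | zero => rfl
  | succ t ih => simp [ATerm.substAll, ih h]
  | add t s ih1 ih2 => simp [ATerm.substAll, ih1 h.1, ih2 h.2]
  | mul t s ih1 ih2 => simp [ATerm.substAll, ih1 h.1, ih2 h.2]

lemma liftSub_congr {c : ℕ} {σ τ : ℕ → ATerm}
    (hs : ∀ n < c, σ n = τ n) : ∀ n < c + 1, liftSub σ n = liftSub τ n := by
  intro n hn
  cases n with
  | zero => rfl
  | succ n => simp [liftSub, hs n (by omega)]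

lemma fml_subst_congr (φ : AFml) (c : ℕ) (h : φ.FreeLt c) (σ τ : ℕ → ATerm)
    (hs : ∀ n < c, σ n = τ n) : φ.substAll σ = φ.substAll τ := by
  induction φ generalizing c σ τ with
  | eq t s => simp [AFml.substAll, term_subst_congr t c h.1 σ τ hs, term_subst_congr s c h.2 σ τ hs]
  | le t s => simp [AFml.substAll, term_subst_congr t c h.1 σ τ hs, term_subst_congr s c h.2 σ τ hs]
  | neg φ ih => simp [AFml.substAll, ih c h σ τ hs]
  | and φ ψ ih1 ih2 => simp [AFml.substAll, ih1 c h.1 σ τ hs, ih2 c h.2 σ τ hs]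
  | or φ ψ ih1 ih2 => simp [AFml.substAll, ih1 c h.1 σ τ hs, ih2 c h.2 σ τ hs]
  | imp φ ψ ih1 ih2 => simp [AFml.substAll, ih1 c h.1 σ τ hs, ih2 c h.2 σ τ hs]
  | all φ ih => simp [AFml.substAll, ih (c + 1) h _ _ (liftSub_congr hs)]
  | ex φ ih => simp [AFml.substAll, ih (c + 1) h _ _ (liftSub_congr hs)]

lemma term_subst_var (t : ATerm) : t.substAll ATerm.var = t := by
  induction t with
  | var n => rfl
  | zero => rfl
  | succ t ih => simp [ATerm.substAll, ih]
  | add t s ih1 ih2 => simp [ATerm.substAll, ih1, ih2]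
  | mul t s ih1 ih2 => simp [ATerm.substAll, ih1, ih2]

lemma liftSub_var : liftSub ATerm.var = ATerm.var := by
  funext n
  cases n with
  | zero => rfl
  | succ n => simp [liftSub, ATerm.lift]

lemma fml_subst_var (φ : AFml) : φ.substAll ATerm.var = φ := by
  induction φ with
  | eq t s => simp [AFml.substAll, term_subst_var]
  | le t s => simp [AFml.substAll, term_subst_var]
  | neg φ ih => simp [AFml.substAll, ih]
  | and φ ψ ih1 ih2 => simp [AFml.substAll, ih1, ih2]
  | or φ ψ ih1 ih2 => simp [AFml.substAll, ih1, ih2]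
  | imp φ ψ ih1 ih2 => simp [AFml.substAll, ih1, ih2]
  | all φ ih => simp [AFml.substAll, ih, liftSub_var]
  | ex φ ih => simp [AFml.substAll, ih, liftSub_var]

lemma fml_subst_closed (φ : AFml) (h : φ.FreeLt 0) (σ : ℕ → ATerm) : φ.substAll σ = φ := by
  rw [fml_subst_congr φ 0 h σ ATerm.var (by simp), fml_subst_var]

lemma term_lift_freeLt (t : ATerm) (d : ℕ) (h : t.FreeLt d) : (t.lift 0).FreeLt (d + 1) := by
  induction t with
  | var n => simpa [ATerm.lift, ATerm.FreeLt] using h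
  | zero => trivial
  | succ t ih => exact ih h
  | add t s ih1 ih2 => exact ⟨ih1 h.1, ih2 h.2⟩
  | mul t s ih1 ih2 => exact ⟨ih1 h.1, ih2 h.2⟩

lemma term_subst_freeLt (t : ATerm) (c d : ℕ) (h : t.FreeLt c) (σ : ℕ → ATerm)
    (hs : ∀ n < c, (σ n).FreeLt d) : (t.substAll σ).FreeLt d := by
  induction t with
  | var n => exact hs n h
  | zero => trivial
  | succ t ih => exact ih h
  | add t s ih1 ih2 => exact ⟨ih1 h.1, ih2 h.2⟩
  | mul t s ih1 ih2 => exact ⟨ih1 h.1, ih2 h.2⟩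

lemma liftSub_freeLt {c d : ℕ} {σ : ℕ → ATerm} (hs : ∀ n < c, (σ n).FreeLt d) :
    ∀ n < c + 1, (liftSub σ n).FreeLt (d + 1) := by
  intro n hn
  cases n with
  | zero => simp [liftSub, ATerm.FreeLt]
  | succ n => exact term_lift_freeLt _ _ (hs n (by omega))

lemma fml_subst_freeLt (φ : AFml) (c d : ℕ) (h : φ.FreeLt c) (σ : ℕ → ATerm)
    (hs : ∀ n < c, (σ n).FreeLt d) : (φ.substAll σ).FreeLt d := by
  induction φ generalizing c d σ with
  | eq t s => exact ⟨term_subst_freeLt t c d h.1 σ hs, term_subst_freeLt s c d h.2 σ hs⟩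
  | le t s => exact ⟨term_subst_freeLt t c d h.1 σ hs, term_subst_freeLt s c d h.2 σ hs⟩
  | neg φ ih => exact ih c d h σ hs
  | and φ ψ ih1 ih2 => exact ⟨ih1 c d h.1 σ hs, ih2 c d h.2 σ hs⟩
  | or φ ψ ih1 ih2 => exact ⟨ih1 c d h.1 σ hs, ih2 c d h.2 σ hs⟩
  | imp φ ψ ih1 ih2 => exact ⟨ih1 c d h.1 σ hs, ih2 c d h.2 σ hs⟩
  | all φ ih => exact ih (c + 1) (d + 1) h _ (liftSub_freeLt hs)
  | ex φ ih => exact ih (c + 1) (d + 1) h _ (liftSub_freeLt hs)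

lemma fml_freeLt_mono (φ : AFml) (c d : ℕ) (h : φ.FreeLt c) (hcd : c ≤ d) : φ.FreeLt d := by
  have := fml_subst_freeLt φ c d h ATerm.var (fun n hn => by
    simp only [ATerm.FreeLt]; omega)
  rwa [fml_subst_var] at this

lemma delta0_subst {φ : AFml} (h : IsDelta0 φ) (σ : ℕ → ATerm) : IsDelta0 (φ.substAll σ) := by
  induction h generalizing σ with
  | eq t s => exact .eq _ _
  | le t s => exact .le _ _
  | neg _ ih => exact .neg (ih σ)
  | and _ _ ih1 ih2 => exact .and (ih1 σ) (ih2 σ)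
  | or _ _ ih1 ih2 => exact .or (ih1 σ) (ih2 σ)
  | imp _ _ ih1 ih2 => exact .imp (ih1 σ) (ih2 σ)
  | ball t _ ih =>
    simp only [AFml.substAll, lift_substAll]
    exact .ball _ (ih _)
  | bex t _ ih =>
    simp only [AFml.substAll, lift_substAll]
    exact .bex _ (ih _)

mutual
theorem sigma1_subst {φ : AFml} (h : IsSigma1 φ) (σ : ℕ → ATerm) : IsSigma1 (φ.substAll σ) := by
  cases h with
  | delta0 h => exact .delta0 (delta0_subst h σ)
  | and h1 h2 => exact .and (sigma1_subst h1 σ) (sigma1_subst h2 σ)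
  | or h1 h2 => exact .or (sigma1_subst h1 σ) (sigma1_subst h2 σ)
  | ex h1 => exact .ex (sigma1_subst h1 _)
  | negPi h1 => exact .negPi (pi1_subst h1 σ)
  | impPiSigma h1 h2 => exact .impPiSigma (pi1_subst h1 σ) (sigma1_subst h2 σ)
theorem pi1_subst {φ : AFml} (h : IsPi1 φ) (σ : ℕ → ATerm) : IsPi1 (φ.substAll σ) := by
  cases h with
  | delta0 h => exact .delta0 (delta0_subst h σ)
  | and h1 h2 => exact .and (pi1_subst h1 σ) (pi1_subst h2 σ)
  | or h1 h2 => exact .or (pi1_subst h1 σ) (pi1_subst h2 σ)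
  | all h1 => exact .all (pi1_subst h1 _)
  | negSigma h1 => exact .negSigma (sigma1_subst h1 σ)
  | impSigmaPi h1 h2 => exact .impSigmaPi (sigma1_subst h1 σ) (pi1_subst h2 σ)
end

lemma val_lift (t : ATerm) (a : ℕ) (ρ : ℕ → ℕ) : (t.lift 0).val (consEnv a ρ) = t.val ρ := by
  induction t with
  | var n => simp [ATerm.lift, ATerm.val, consEnv]
  | zero => rfl
  | succ t ih => simp [ATerm.lift, ATerm.val, ih]
  | add t s ih1 ih2 => simp [ATerm.lift, ATerm.val, ih1, ih2]
  | mul t s ih1 ih2 => simp [ATerm.lift, ATerm.val, ih1, ih2]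

lemma val_subst (t : ATerm) (σ : ℕ → ATerm) (ρ : ℕ → ℕ) :
    (t.substAll σ).val ρ = t.val (fun n => (σ n).val ρ) := by
  induction t with
  | var n => rfl
  | zero => rfl
  | succ t ih => simp [ATerm.substAll, ATerm.val, ih]
  | add t s ih1 ih2 => simp [ATerm.substAll, ATerm.val, ih1, ih2]
  | mul t s ih1 ih2 => simp [ATerm.substAll, ATerm.val, ih1, ih2]

lemma liftSub_val (σ : ℕ → ATerm) (a : ℕ) (ρ : ℕ → ℕ) :
    (fun n => (liftSub σ n).val (consEnv a ρ)) = consEnv a (fun n => (σ n).val ρ) := by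
  funext n
  cases n with
  | zero => rfl
  | succ n => exact val_lift _ _ _

lemma sat_subst (φ : AFml) (σ : ℕ → ATerm) (ρ : ℕ → ℕ) :
    (φ.substAll σ).Sat ρ ↔ φ.Sat (fun n => (σ n).val ρ) := by
  induction φ generalizing σ ρ with
  | eq t s => simp [AFml.substAll, AFml.Sat, val_subst]
  | le t s => simp [AFml.substAll, AFml.Sat, val_subst]
  | neg φ ih => simp [AFml.substAll, AFml.Sat, ih]
  | and φ ψ ih1 ih2 => simp [AFml.substAll, AFml.Sat, ih1, ih2]
  | or φ ψ ih1 ih2 => simp [AFml.substAll, AFml.Sat, ih1, ih2]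
  | imp φ ψ ih1 ih2 => simp [AFml.substAll, AFml.Sat, ih1, ih2]
  | all φ ih => simp [AFml.substAll, AFml.Sat, ih, liftSub_val]
  | ex φ ih => simp [AFml.substAll, AFml.Sat, ih, liftSub_val]

/-! ### Propositional reasoning -/

lemma Proves.mono {Γ Δ : Set AFml} (h : Γ ⊆ Δ) {φ : AFml} (p : Proves Γ φ) : Proves Δ φ := by
  induction p with
  | ax h1 => exact .ax (h h1)
  | taut h1 => exact .taut h1
  | mp _ _ ih1 ih2 => exact .mp ih1 ih2
  | allE φ t => exact .allE φ t
  | exI φ t => exact .exI φ t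
  | allImp φ ψ => exact .allImp φ ψ
  | vacAll φ => exact .vacAll φ
  | exDef φ => exact .exDef φ
  | gen _ ih => exact .gen ih
  | eqRefl t => exact .eqRefl t
  | eqSubst φ t s => exact .eqSubst φ t s

lemma tc1 {Γ : Set AFml} {a b : AFml} (h1 : Proves Γ a)
    (h : ∀ v, a.evalProp v → b.evalProp v) : Proves Γ b :=
  .mp (.taut (φ := .imp a b) fun v => h v) h1

lemma tc2 {Γ : Set AFml} {a b c : AFml} (h1 : Proves Γ a) (h2 : Proves Γ b)
    (h : ∀ v, a.evalProp v → b.evalProp v → c.evalProp v) : Proves Γ c :=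
  .mp (tc1 (b := .imp b c) h1 fun v => h v) h2

lemma tc3 {Γ : Set AFml} {a b c d : AFml} (h1 : Proves Γ a) (h2 : Proves Γ b) (h3 : Proves Γ c)
    (h : ∀ v, a.evalProp v → b.evalProp v → c.evalProp v → d.evalProp v) : Proves Γ d :=
  .mp (tc2 (c := .imp c d) h1 h2 fun v => h v) h3

lemma tc4 {Γ : Set AFml} {a b c d e : AFml} (h1 : Proves Γ a) (h2 : Proves Γ b)
    (h3 : Proves Γ c) (h4 : Proves Γ d)
    (h : ∀ v, a.evalProp v → b.evalProp v → c.evalProp v → d.evalProp v → e.evalProp v) :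
    Proves Γ e :=
  .mp (tc3 (d := .imp d e) h1 h2 h3 fun v => h v) h4

lemma exElim {Γ : Set AFml} {φ ψ : AFml} (h : Proves Γ (.imp φ (ψ.lift 0))) :
    Proves Γ (.imp (.ex φ) ψ) := by
  have h1 : Proves Γ (.imp (.neg (ψ.lift 0)) (.neg φ)) :=
    tc1 h fun v => by simp only [AFml.evalProp]; tauto
  have h2 := Proves.mp (.allImp _ _) (.gen h1)
  have h3 : Proves Γ (.imp (.neg ψ) (.all (.neg (ψ.lift 0)))) := .vacAll (.neg ψ)
  exact tc3 h2 h3 (.exDef φ) fun v => by simp only [iffF, AFml.evalProp]; tauto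

lemma notEx {Γ : Set AFml} {φ : AFml} (h : Proves Γ (.neg φ)) : Proves Γ (.neg (.ex φ)) :=
  tc2 (.gen h) (.exDef φ) fun v => by simp only [iffF, AFml.evalProp]; tauto

/-! ### Equality -/

lemma eqSymm {Γ : Set AFml} (t s : ATerm) : Proves Γ (.imp (.eq t s) (.eq s t)) := by
  have h := Proves.eqSubst (Γ := Γ) (.eq (.var 0) (t.lift 0)) t s
  simp only [AFml.subst0, AFml.substAll, ATerm.substAll, lift_subst0, subst0Env] at h
  exact tc2 h (.eqRefl t) fun v => by simp only [AFml.evalProp]; tauto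

lemma eqTrans {Γ : Set AFml} (t s u : ATerm) :
    Proves Γ (.imp (.eq t s) (.imp (.eq s u) (.eq t u))) := by
  have h := Proves.eqSubst (Γ := Γ) (.eq (t.lift 0) (.var 0)) s u
  simp only [AFml.subst0, AFml.substAll, ATerm.substAll, lift_subst0, subst0Env] at h
  exact tc1 h fun v => by simp only [AFml.evalProp]; tauto

lemma congSucc {Γ : Set AFml} (t s : ATerm) :
    Proves Γ (.imp (.eq t s) (.eq (.succ t) (.succ s))) := by
  have h := Proves.eqSubst (Γ := Γ) (.eq (.succ (t.lift 0)) (.succ (.var 0))) t s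
  simp only [AFml.subst0, AFml.substAll, ATerm.substAll, lift_subst0, subst0Env] at h
  exact tc2 h (.eqRefl t.succ) fun v => by simp only [AFml.evalProp]; tauto

lemma congAddR {Γ : Set AFml} (z t s : ATerm) :
    Proves Γ (.imp (.eq t s) (.eq (.add z t) (.add z s))) := by
  have h := Proves.eqSubst (Γ := Γ) (.eq (.add (z.lift 0) (t.lift 0)) (.add (z.lift 0) (.var 0))) t s
  simp only [AFml.subst0, AFml.substAll, ATerm.substAll, lift_subst0, subst0Env] at h
  exact tc2 h (.eqRefl (.add z t)) fun v => by simp only [AFml.evalProp]; tauto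

lemma congAddL {Γ : Set AFml} (z t s : ATerm) :
    Proves Γ (.imp (.eq t s) (.eq (.add t z) (.add s z))) := by
  have h := Proves.eqSubst (Γ := Γ) (.eq (.add (t.lift 0) (z.lift 0)) (.add (.var 0) (z.lift 0))) t s
  simp only [AFml.subst0, AFml.substAll, ATerm.substAll, lift_subst0, subst0Env] at h
  exact tc2 h (.eqRefl (.add t z)) fun v => by simp only [AFml.evalProp]; tauto

lemma congMulR {Γ : Set AFml} (z t s : ATerm) :
    Proves Γ (.imp (.eq t s) (.eq (.mul z t) (.mul z s))) := by
  have h := Proves.eqSubst (Γ := Γ) (.eq (.mul (z.lift 0) (t.lift 0)) (.mul (z.lift 0) (.var 0))) t s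
  simp only [AFml.subst0, AFml.substAll, ATerm.substAll, lift_subst0, subst0Env] at h
  exact tc2 h (.eqRefl (.mul z t)) fun v => by simp only [AFml.evalProp]; tauto

lemma congMulL {Γ : Set AFml} (z t s : ATerm) :
    Proves Γ (.imp (.eq t s) (.eq (.mul t z) (.mul s z))) := by
  have h := Proves.eqSubst (Γ := Γ) (.eq (.mul (t.lift 0) (z.lift 0)) (.mul (.var 0) (z.lift 0))) t s
  simp only [AFml.subst0, AFml.substAll, ATerm.substAll, lift_subst0, subst0Env] at h
  exact tc2 h (.eqRefl (.mul t z)) fun v => by simp only [AFml.evalProp]; tauto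

lemma congLe {Γ : Set AFml} (z t s : ATerm) :
    Proves Γ (.imp (.eq t s) (.imp (.le z t) (.le z s))) := by
  have h := Proves.eqSubst (Γ := Γ) (.le (z.lift 0) (.var 0)) t s
  simpa only [AFml.subst0, AFml.substAll, ATerm.substAll, lift_subst0, subst0Env] using h

lemma congLeL {Γ : Set AFml} (z t s : ATerm) :
    Proves Γ (.imp (.eq t s) (.imp (.le t z) (.le s z))) := by
  have h := Proves.eqSubst (Γ := Γ) (.le (.var 0) (z.lift 0)) t s
  simpa only [AFml.subst0, AFml.substAll, ATerm.substAll, lift_subst0, subst0Env] using h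

lemma Proves.eqS {Γ : Set AFml} {t s : ATerm} (h : Proves Γ (.eq t s)) : Proves Γ (.eq s t) :=
  .mp (eqSymm _ _) h

lemma Proves.eqT {Γ : Set AFml} {t s u : ATerm} (h : Proves Γ (.eq t s))
    (h' : Proves Γ (.eq s u)) : Proves Γ (.eq t u) :=
  .mp (.mp (eqTrans _ _ _) h) h'

/-! ### Instances of the axioms of PA -/

lemma allInst {Γ : Set AFml} {φ : AFml} (h : Proves Γ (.all φ)) (t : ATerm) :
    Proves Γ (φ.substAll (subst0Env t)) := .mp (.allE φ t) h

lemma pa_succNeZero (t : ATerm) : Proves PA (.neg (.eq (.succ t) .zero)) := by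
  simpa only [AFml.substAll, ATerm.substAll, subst0Env] using
    allInst (Proves.ax (Γ := PA) PAax.succNeZero) t

lemma pa_succInj (t s : ATerm) :
    Proves PA (.imp (.eq (.succ t) (.succ s)) (.eq t s)) := by
  simpa only [AFml.substAll, ATerm.substAll, subst0Env, liftSub, lift_subst0] using
    allInst (allInst (Proves.ax (Γ := PA) PAax.succInj) t) s

lemma pa_addZero (t : ATerm) : Proves PA (.eq (.add t .zero) t) := by
  simpa only [AFml.substAll, ATerm.substAll, subst0Env] using
    allInst (Proves.ax (Γ := PA) PAax.addZero) t

lemma pa_addSucc (t s : ATerm) :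
    Proves PA (.eq (.add t (.succ s)) (.succ (.add t s))) := by
  simpa only [AFml.substAll, ATerm.substAll, subst0Env, liftSub, lift_subst0] using
    allInst (allInst (Proves.ax (Γ := PA) PAax.addSucc) t) s

lemma pa_mulZero (t : ATerm) : Proves PA (.eq (.mul t .zero) .zero) := by
  simpa only [AFml.substAll, ATerm.substAll, subst0Env] using
    allInst (Proves.ax (Γ := PA) PAax.mulZero) t

lemma pa_mulSucc (t s : ATerm) :
    Proves PA (.eq (.mul t (.succ s)) (.add (.mul t s) t)) := by
  simpa only [AFml.substAll, ATerm.substAll, subst0Env, liftSub, lift_subst0] using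
    allInst (allInst (Proves.ax (Γ := PA) PAax.mulSucc) t) s

lemma pa_leDef (t s : ATerm) :
    Proves PA (iffF (.le t s) (.ex (.eq (.add (.var 0) (t.lift 0)) (s.lift 0)))) := by
  have h := allInst (allInst (Proves.ax (Γ := PA) PAax.leDef) t) s
  have e : (liftSub (liftSub (subst0Env t)) 2) = (t.lift 0).lift 0 := rfl
  have e1 : (liftSub (liftSub (subst0Env t)) 1) = .var 1 := rfl
  have e2 : (liftSub (liftSub (subst0Env t)) 0) = .var 0 := rfl
  have e3 : (liftSub (subst0Env t) 1) = t.lift 0 := rfl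
  have e4 : (liftSub (subst0Env t) 0) = .var 0 := rfl
  have e5 : (liftSub (subst0Env s) 1) = s.lift 0 := rfl
  have e6 : (liftSub (subst0Env s) 0) = .var 0 := rfl
  have e7 : (subst0Env s 0) = s := rfl
  simpa only [iffF, AFml.substAll, ATerm.substAll, e, e1, e2, e3, e4, e5, e6, e7, lift_subst0,
    lift_substAll] using h

/-- Every element is zero or a successor. -/
lemma pa_cases (x : ATerm) :
    Proves PA (.imp (.neg (.eq x .zero)) (.ex (.eq (x.lift 0) (.succ (.var 0))))) := by
  have h := Proves.ax (Γ := PA)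
    (PAax.ind (.imp (.neg (.eq (.var 0) .zero)) (.ex (.eq (.var 1) (.succ (.var 0))))))
  have h0 : Proves PA (AFml.subst0
      (.imp (.neg (.eq (.var 0) .zero)) (.ex (.eq (.var 1) (.succ (.var 0))))) .zero) := by
    simp only [AFml.subst0, AFml.substAll, ATerm.substAll, subst0Env]
    exact tc1 (.eqRefl .zero) fun v => by simp only [AFml.evalProp]; tauto
  have h1 : Proves PA (.all (.imp
      (.imp (.neg (.eq (.var 0) .zero)) (.ex (.eq (.var 1) (.succ (.var 0)))))
      (succSubst (.imp (.neg (.eq (.var 0) .zero)) (.ex (.eq (.var 1) (.succ (.var 0)))))))) := by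
    apply Proves.gen
    have h2 := Proves.exI (Γ := PA) (.eq (.succ (.var 1)) (.succ (.var 0))) (.var 0)
    simp only [AFml.subst0, AFml.substAll, ATerm.substAll, subst0Env] at h2
    simp [succSubst, AFml.substAll, ATerm.substAll, liftSub, ATerm.lift]
    exact tc2 h2 (.eqRefl (.succ (.var 0))) fun v => by simp only [AFml.evalProp]; tauto
  have h3 := allInst (.mp h (tc2 (c := .and _ _) h0 h1 fun v a b => ⟨a, b⟩)) x
  simpa only [AFml.substAll, ATerm.substAll, subst0Env, liftSub] using h3

/-! ### Numeralwise facts -/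

lemma pa_add (k l : ℕ) : Proves PA (.eq (.add (numeral k) (numeral l)) (numeral (k + l))) := by
  induction l with
  | zero => exact pa_addZero _
  | succ l ih => exact (pa_addSucc _ _).eqT (.mp (congSucc _ _) ih)

lemma pa_mul (k l : ℕ) : Proves PA (.eq (.mul (numeral k) (numeral l)) (numeral (k * l))) := by
  induction l with
  | zero => exact pa_mulZero _
  | succ l ih => exact (pa_mulSucc _ _).eqT ((Proves.mp (congAddL _ _ _) ih).eqT (pa_add _ _))

lemma pa_term (t : ATerm) (ρ : ℕ → ℕ) :
    Proves PA (.eq (t.substAll fun n => numeral (ρ n)) (numeral (t.val ρ))) := by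
  induction t with
  | var n => exact .eqRefl _
  | zero => exact .eqRefl _
  | succ t ih => exact .mp (congSucc _ _) ih
  | add t s ih1 ih2 =>
    exact ((Proves.mp (congAddL _ _ _) ih1).eqT (.mp (congAddR _ _ _) ih2)).eqT (pa_add _ _)
  | mul t s ih1 ih2 =>
    exact ((Proves.mp (congMulL _ _ _) ih1).eqT (.mp (congMulR _ _ _) ih2)).eqT (pa_mul _ _)

lemma pa_ne (k l : ℕ) (h : k ≠ l) : Proves PA (.neg (.eq (numeral k) (numeral l))) := by
  induction k generalizing l with
  | zero =>
    cases l with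
    | zero => exact absurd rfl h
    | succ l =>
      exact tc2 (eqSymm _ _) (pa_succNeZero (numeral l)) fun v => by
        simp only [AFml.evalProp, numeral]; tauto
  | succ k ih =>
    cases l with
    | zero => exact pa_succNeZero _
    | succ l =>
      exact tc2 (pa_succInj _ _) (ih l (by omega)) fun v => by
        simp only [AFml.evalProp, numeral]; tauto

lemma pa_le (k l : ℕ) (h : k ≤ l) : Proves PA (.le (numeral k) (numeral l)) := by
  have h1 := Proves.exI (Γ := PA)
    (.eq (.add (.var 0) ((numeral k).lift 0)) ((numeral l).lift 0)) (numeral (l - k))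
  simp only [AFml.subst0, AFml.substAll, ATerm.substAll, subst0Env, lift_subst0] at h1
  have h2 := pa_add (l - k) k
  rw [Nat.sub_add_cancel h] at h2
  exact tc3 h1 h2 (pa_leDef (numeral k) (numeral l)) fun v => by
    simp only [AFml.evalProp, iffF]; tauto

/-- The disjunction `t = 0 ∨ ⋯ ∨ t = k`. -/
def disj (t : ATerm) : ℕ → AFml
  | 0 => .eq t .zero
  | k + 1 => .or (disj t k) (.eq t (numeral (k + 1)))

lemma disj_lift (t : ATerm) (k : ℕ) : (disj t k).lift 0 = disj (t.lift 0) k := by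
  induction k with
  | zero => rfl
  | succ k ih => simp [disj, AFml.lift, ih, numeral_lift]

lemma disj_zero {Γ : Set AFml} (t : ATerm) (k : ℕ) :
    Proves Γ (.imp (.eq t .zero) (disj t k)) := by
  induction k with
  | zero => exact .taut fun v => by simp only [disj, AFml.evalProp]; tauto
  | succ k ih => exact tc1 ih fun v => by simp only [disj, AFml.evalProp]; tauto

lemma disj_elim {Γ : Set AFml} (t : ATerm) (ψ : AFml) (k : ℕ)
    (h : ∀ a ≤ k, Proves Γ (.imp (.eq t (numeral a)) ψ)) : Proves Γ (.imp (disj t k) ψ) := by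
  induction k with
  | zero => exact h 0 le_rfl
  | succ k ih =>
    exact tc2 (ih fun a ha => h a (by omega)) (h (k + 1) le_rfl) fun v => by
      simp only [disj, AFml.evalProp]; tauto

lemma disj_succ {Γ : Set AFml} (x y : ATerm) (k : ℕ) :
    Proves Γ (.imp (.eq x (.succ y)) (.imp (disj y k) (disj x (k + 1)))) := by
  induction k with
  | zero =>
    exact tc2 (congSucc y .zero) (eqTrans x (.succ y) (.succ .zero)) fun v => by
      simp only [disj, AFml.evalProp, numeral]; tauto
  | succ k ih =>
    exact tc3 ih (congSucc y (numeral (k + 1))) (eqTrans x (.succ y) (numeral (k + 2))) fun v => by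
      simp only [disj, AFml.evalProp, numeral]; tauto

lemma pa_add_disj (k : ℕ) (z x : ATerm) :
    Proves PA (.imp (.eq (.add z x) (numeral k)) (disj x k)) := by
  induction k generalizing z x with
  | zero =>
    have key : ∀ z x y : ATerm, Proves PA (.imp (.eq x (.succ y))
        (.imp (.eq (.add z x) (numeral 0)) (disj x 0))) := by
      intro z x y
      have h1 := Proves.eqS (pa_addSucc z y)
      have h2 := congAddR (Γ := PA) z x (.succ y)
      have h3 := pa_succNeZero (.add z y)
      have h4 := eqSymm (Γ := PA) (.add z x) (.add z (.succ y))
      have h5 := eqTrans (Γ := PA) (.succ (.add z y)) (.add z (.succ y)) (.add z x)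
      have h6 := eqTrans (Γ := PA) (.succ (.add z y)) (.add z x) .zero
      have h7 := tc4 (e := .imp (.eq x (.succ y)) (.eq (.succ (.add z y)) (.add z x)))
        h1 h2 h4 h5 fun v => by simp only [AFml.evalProp]; tauto
      exact tc3 h3 h6 h7 fun v => by simp only [AFml.evalProp, numeral]; tauto
    have h1 := key (z.lift 0) (x.lift 0) (.var 0)
    have h2 : Proves PA (.imp (.ex (.eq (x.lift 0) (.succ (.var 0))))
        (.imp (.eq (.add z x) (numeral 0)) (disj x 0))) := exElim h1
    exact tc3 h2 (pa_cases x) (disj_zero (Γ := PA) x 0) fun v => by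
      simp only [AFml.evalProp]; tauto
  | succ k ih =>
    have key : ∀ z x y : ATerm, Proves PA (.imp (.eq x (.succ y))
        (.imp (.eq (.add z x) (numeral (k + 1))) (disj x (k + 1)))) := by
      intro z x y
      have h1 := Proves.eqS (pa_addSucc z y)
      have h2 := congAddR (Γ := PA) z x (.succ y)
      have h3 := pa_succInj (.add z y) (numeral k)
      have h4 := eqSymm (Γ := PA) (.add z x) (.add z (.succ y))
      have h5 := eqTrans (Γ := PA) (.succ (.add z y)) (.add z (.succ y)) (.add z x)
      have h6 := eqTrans (Γ := PA) (.succ (.add z y)) (.add z x) (numeral (k + 1))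
      have h7 := tc4 (e := .imp (.eq x (.succ y)) (.eq (.succ (.add z y)) (.add z x)))
        h1 h2 h4 h5 fun v => by simp only [AFml.evalProp]; tauto
      have h8 := tc4 (e := .imp (.eq x (.succ y)) (.imp (.eq (.add z x) (numeral (k + 1)))
        (disj y k))) h3 h6 h7 (ih z y) fun v => by
          simp only [AFml.evalProp, numeral]; tauto
      exact tc2 h8 (disj_succ x y k) fun v h h' a b => h' a (h a b)
    have h1 := key (z.lift 0) (x.lift 0) (.var 0)
    have h2 : Proves PA (.imp (.ex (.eq (x.lift 0) (.succ (.var 0))))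
        (.imp (.eq (.add z x) (numeral (k + 1))) (disj x (k + 1)))) := by
      apply exElim
      simpa only [AFml.lift, ATerm.lift, disj_lift, numeral_lift] using h1
    exact tc3 h2 (pa_cases x) (disj_zero (Γ := PA) x (k + 1)) fun v => by
      simp only [AFml.evalProp]; tauto

lemma pa_le_disj (k : ℕ) (x : ATerm) : Proves PA (.imp (.le x (numeral k)) (disj x k)) := by
  have h1 : Proves PA (.imp (.ex (.eq (.add (.var 0) (x.lift 0)) ((numeral k).lift 0)))
      (disj x k)) := by
    apply exElim
    rw [numeral_lift, disj_lift]
    exact pa_add_disj k _ _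
  exact tc2 h1 (pa_leDef x (numeral k)) fun v => by simp only [AFml.evalProp, iffF]; tauto

lemma pa_not_le (k l : ℕ) (h : l < k) : Proves PA (.neg (.le (numeral k) (numeral l))) := by
  have h1 := disj_elim (Γ := PA) (numeral k) (.neg (.le (numeral k) (numeral l))) l
    fun a ha => tc1 (pa_ne k a (by omega)) fun v => by simp only [AFml.evalProp]; tauto
  exact tc2 h1 (pa_le_disj l (numeral k)) fun v => by simp only [AFml.evalProp]; tauto

/-! ### Σ₁-completeness -/

/-- Instantiate all variables by numerals. -/
def AFml.inst (ρ : ℕ → ℕ) (φ : AFml) : AFml := φ.substAll fun n => numeral (ρ n)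

lemma inst_body (φ : AFml) (ρ : ℕ → ℕ) (a : ℕ) :
    (φ.substAll (liftSub fun n => numeral (ρ n))).subst0 (numeral a) = φ.inst (consEnv a ρ) := by
  rw [AFml.subst0, fml_comp, AFml.inst]
  congr 1
  funext n
  cases n with
  | zero => rfl
  | succ n => simp [liftSub, numeral_lift, numeral_subst, consEnv]

lemma inst_body_var (φ : AFml) (ρ : ℕ → ℕ) :
    (φ.substAll (liftSub fun n => numeral (ρ n))).subst0 (.var 0) =
      φ.substAll (liftSub fun n => numeral (ρ n)) := by
  rw [AFml.subst0, fml_comp]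
  congr 1
  funext n
  cases n with
  | zero => rfl
  | succ n => simp [liftSub, numeral_lift, numeral_subst]

lemma var_eq_body (φ : AFml) (ρ : ℕ → ℕ) (a : ℕ) (h : Proves PA (φ.inst (consEnv a ρ))) :
    Proves PA (.imp (.eq (.var 0) (numeral a))
      (φ.substAll (liftSub fun n => numeral (ρ n)))) := by
  have h1 := Proves.eqSubst (Γ := PA) (φ.substAll (liftSub fun n => numeral (ρ n)))
    (numeral a) (.var 0)
  rw [inst_body, inst_body_var] at h1
  exact tc3 h h1 (eqSymm (.var 0) (numeral a)) fun v => by simp only [AFml.evalProp]; tauto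

lemma bounded_body (φ : AFml) (t : ATerm) (ρ : ℕ → ℕ)
    (h : ∀ a ≤ t.val ρ, Proves PA (φ.inst (consEnv a ρ))) :
    Proves PA (.imp (.le (.var 0) ((t.lift 0).substAll (liftSub fun n => numeral (ρ n))))
      (φ.substAll (liftSub fun n => numeral (ρ n)))) := by
  have h1 := disj_elim (Γ := PA) (.var 0) _ (t.val ρ) fun a ha => var_eq_body φ ρ a (h a ha)
  have h2 := pa_le_disj (t.val ρ) (.var 0)
  have h3 : Proves PA (.eq ((t.lift 0).substAll (liftSub fun n => numeral (ρ n)))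
      (numeral (t.val ρ))) := by
    have := pa_term (t.lift 0) (consEnv 0 ρ)
    rw [val_lift] at this
    convert this using 2
    rw [lift_substAll]
    clear * -
    induction t with
    | var n => simp [ATerm.lift, ATerm.substAll, numeral_lift, consEnv]
    | zero => rfl
    | succ t ih => simp [ATerm.lift, ATerm.substAll, ih]
    | add t s ih1 ih2 => simp [ATerm.lift, ATerm.substAll, ih1, ih2]
    | mul t s ih1 ih2 => simp [ATerm.lift, ATerm.substAll, ih1, ih2]
  exact tc4 h1 h2 h3 (congLe (.var 0) _ _) fun v => by simp only [AFml.evalProp]; tauto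

lemma le_complete (t s : ATerm) (ρ : ℕ → ℕ) (h : t.val ρ ≤ s.val ρ) :
    Proves PA ((AFml.le t s).inst ρ) := by
  have h1 := pa_le _ _ h
  have h2 := Proves.mp (.mp (congLe _ _ _) (pa_term s ρ).eqS) h1
  exact Proves.mp (.mp (congLeL _ _ _) (pa_term t ρ).eqS) h2

lemma le_refute (t s : ATerm) (ρ : ℕ → ℕ) (h : ¬ t.val ρ ≤ s.val ρ) :
    Proves PA (.neg ((AFml.le t s).inst ρ)) := by
  have h1 := pa_not_le _ _ (Nat.lt_of_not_le h)
  have h2 := Proves.mp (congLe (t.substAll fun n => numeral (ρ n)) _ _) (pa_term s ρ)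
  have h3 := Proves.mp (congLeL (numeral (s.val ρ)) _ _) (pa_term t ρ)
  exact tc3 h1 h2 h3 fun v => by simp only [AFml.inst, AFml.substAll, AFml.evalProp]; tauto

theorem delta0_complete {φ : AFml} (h : IsDelta0 φ) (ρ : ℕ → ℕ) :
    (φ.Sat ρ → Proves PA (φ.inst ρ)) ∧ (¬ φ.Sat ρ → Proves PA (.neg (φ.inst ρ))) := by
  induction h generalizing ρ with
  | eq t s =>
    constructor
    · intro h
      have h1 := pa_term s ρ
      rw [← (show t.val ρ = s.val ρ from h)] at h1
      exact (pa_term t ρ).eqT h1.eqS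
    · intro h
      have h1 := pa_ne _ _ h
      have h2 := Proves.mp (eqTrans _ _ _) (pa_term t ρ).eqS
        (ψ := .imp (.eq (t.substAll fun n => numeral (ρ n)) (s.substAll fun n => numeral (ρ n)))
          (.eq (numeral (t.val ρ)) (s.substAll fun n => numeral (ρ n))))
      have h3 := eqTrans (Γ := PA) (numeral (t.val ρ)) (s.substAll fun n => numeral (ρ n))
        (numeral (s.val ρ))
      exact tc4 h1 h2 h3 (pa_term s ρ) fun v => by
        simp only [AFml.inst, AFml.substAll, AFml.evalProp]; tauto
  | le t s => exact ⟨le_complete t s ρ, le_refute t s ρ⟩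
  | neg _ ih =>
    constructor
    · exact (ih ρ).2
    · intro h
      exact tc1 ((ih ρ).1 (not_not.mp h)) fun v a b => b a
  | @and φ ψ _ _ ih1 ih2 =>
    constructor
    · intro h
      exact tc2 ((ih1 ρ).1 h.1) ((ih2 ρ).1 h.2) fun v a b => ⟨a, b⟩
    · intro h
      by_cases h1 : φ.Sat ρ
      · exact tc1 ((ih2 ρ).2 fun h2 => h ⟨h1, h2⟩) fun v a b => a b.2
      · exact tc1 ((ih1 ρ).2 h1) fun v a b => a b.1
  | or _ _ ih1 ih2 =>
    constructor
    · rintro (h | h)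
      · exact tc1 ((ih1 ρ).1 h) fun v a => .inl a
      · exact tc1 ((ih2 ρ).1 h) fun v a => .inr a
    · intro h
      exact tc2 ((ih1 ρ).2 fun a => h (.inl a)) ((ih2 ρ).2 fun a => h (.inr a))
        fun v a b c => c.elim a b
  | @imp φ ψ _ _ ih1 ih2 =>
    constructor
    · intro h
      by_cases h1 : φ.Sat ρ
      · exact tc1 ((ih2 ρ).1 (h h1)) fun v a _ => a
      · exact tc1 ((ih1 ρ).2 h1) fun v a b => absurd b a
    · intro h
      have h1 : φ.Sat ρ := by
        by_contra h1
        exact h fun h2 => absurd h2 h1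
      have h2 : ¬ ψ.Sat ρ := fun h2 => h fun _ => h2
      exact tc2 ((ih1 ρ).1 h1) ((ih2 ρ).2 h2) fun v a b c => b (c a)
  | @ball φ t _ ih =>
    constructor
    · intro h
      refine Proves.gen (bounded_body φ t ρ fun a ha => (ih _).1 (h a ?_))
      change (consEnv a ρ) 0 ≤ _
      rw [val_lift]
      exact ha
    · intro h
      simp only [AFml.Sat, not_forall] at h
      obtain ⟨a, h1, h2⟩ := h
      have h3 := Proves.allE (Γ := PA) ((AFml.imp (.le (.var 0) (t.lift 0)) φ).substAll
        (liftSub fun n => numeral (ρ n))) (numeral a)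
      rw [inst_body] at h3
      exact tc3 h3 (le_complete _ _ _ h1) ((ih _).2 h2) fun v a b c d => c (a d b)
  | @bex φ t _ ih =>
    constructor
    · rintro ⟨a, h1, h2⟩
      have h3 := Proves.exI (Γ := PA) ((AFml.and (.le (.var 0) (t.lift 0)) φ).substAll
        (liftSub fun n => numeral (ρ n))) (numeral a)
      rw [inst_body] at h3
      exact tc3 h3 (le_complete _ _ _ h1) ((ih _).1 h2) fun v a b c => a ⟨b, c⟩
    · intro h
      have h1 := bounded_body (.neg φ) t ρ fun a ha => (ih (consEnv a ρ)).2 fun h2 => h ⟨a, by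
        change (consEnv a ρ) 0 ≤ _
        rw [val_lift]
        exact ha, h2⟩
      exact notEx (tc1 h1 fun v a b => a b.1 b.2)

mutual
theorem sigma1_complete {φ : AFml} (h : IsSigma1 φ) (ρ : ℕ → ℕ) (hs : φ.Sat ρ) :
    Proves PA (φ.inst ρ) := by
  cases h with
  | delta0 h => exact (delta0_complete h ρ).1 hs
  | and h1 h2 =>
    exact tc2 (sigma1_complete h1 ρ hs.1) (sigma1_complete h2 ρ hs.2) fun v a b => ⟨a, b⟩
  | or h1 h2 =>
    rcases hs with hs | hs
    · exact tc1 (sigma1_complete h1 ρ hs) fun v a => .inl a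
    · exact tc1 (sigma1_complete h2 ρ hs) fun v a => .inr a
  | @ex φ h1 =>
    obtain ⟨a, ha⟩ := hs
    have h3 := Proves.exI (Γ := PA) (φ.substAll (liftSub fun n => numeral (ρ n))) (numeral a)
    rw [inst_body] at h3
    exact .mp h3 (sigma1_complete h1 _ ha)
  | negPi h1 => exact pi1_refute h1 ρ hs
  | @impPiSigma φ ψ h1 h2 =>
    by_cases h : φ.Sat ρ
    · exact tc1 (sigma1_complete h2 ρ (hs h)) fun v a _ => a
    · exact tc1 (pi1_refute h1 ρ h) fun v a b => absurd b a
theorem pi1_refute {φ : AFml} (h : IsPi1 φ) (ρ : ℕ → ℕ) (hs : ¬ φ.Sat ρ) :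
    Proves PA (.neg (φ.inst ρ)) := by
  cases h with
  | delta0 h => exact (delta0_complete h ρ).2 hs
  | @and φ ψ h1 h2 =>
    by_cases h : φ.Sat ρ
    · exact tc1 (pi1_refute h2 ρ fun a => hs ⟨h, a⟩) fun v a b => a b.2
    · exact tc1 (pi1_refute h1 ρ h) fun v a b => a b.1
  | or h1 h2 =>
    exact tc2 (pi1_refute h1 ρ fun a => hs (.inl a)) (pi1_refute h2 ρ fun a => hs (.inr a))
        fun v a b c => c.elim a b
  | @all φ h1 =>
    simp only [AFml.Sat, not_forall] at hs
    obtain ⟨a, ha⟩ := hs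
    have h3 := Proves.allE (Γ := PA) (φ.substAll (liftSub fun n => numeral (ρ n))) (numeral a)
    rw [inst_body] at h3
    exact tc2 h3 (pi1_refute h1 _ ha) fun v a b c => b (a c)
  | negSigma h1 =>
    exact tc1 (sigma1_complete h1 ρ (not_not.mp hs)) fun v a b => b a
  | @impSigmaPi φ ψ h1 h2 =>
    have h3 : φ.Sat ρ := by
      by_contra h3
      exact hs fun h2 => absurd h2 h3
    exact tc2 (sigma1_complete h1 ρ h3) (pi1_refute h2 ρ fun a => hs fun _ => a)
      fun v a b c => b (c a)
end

lemma sigma1_true {φ : AFml} (h : IsSigma1 φ) (hc : φ.FreeLt 0) (ht : TrueN φ) :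
    Proves PA φ := by
  have := sigma1_complete h _ ht
  rwa [AFml.inst, fml_subst_closed φ hc] at this

/-! ### The diagonal sentence -/

/-- `y = ⟨a, b⟩` (Cantor–Szudzik pairing). -/
def pairF (a b y : ATerm) : AFml :=
  .or (.and (.le (.succ a) b) (.eq y (.add (.mul b b) a)))
    (.and (.le b a) (.eq y (.add (.add (.mul a a) a) b)))

lemma pairF_sat (a b y : ATerm) (ρ : ℕ → ℕ) :
    (pairF a b y).Sat ρ ↔ y.val ρ = Nat.pair (a.val ρ) (b.val ρ) := by
  simp only [pairF, AFml.Sat, ATerm.val, Nat.pair]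
  split_ifs with h
  · constructor
    · rintro (h1 | h1)
      · exact h1.2
      · omega
    · intro h1
      exact .inl ⟨h, h1⟩
  · constructor
    · rintro (h1 | h1)
      · omega
      · exact h1.2
    · intro h1
      exact .inr ⟨by omega, h1⟩

lemma pairF_delta0 (a b y : ATerm) : IsDelta0 (pairF a b y) :=
  .or (.and (.le _ _) (.eq _ _)) (.and (.le _ _) (.eq _ _))

lemma pairF_freeLt (c : ℕ) (a b y : ATerm) (ha : a.FreeLt c) (hb : b.FreeLt c) (hy : y.FreeLt c) :
    (pairF a b y).FreeLt c := by
  simp [pairF, AFml.FreeLt, ATerm.FreeLt, ha, hb, hy]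

/-- `u = a mod ((i + 1) * b + 1)`. -/
def betaF (a b i u : ATerm) : AFml :=
  .and (.le u (.mul (.succ i) b))
    (.ex (.and (.le (.var 0) (a.lift 0)) (.eq (a.lift 0)
      (.add (.mul (.var 0) (.succ (.mul (.succ (i.lift 0)) (b.lift 0)))) (u.lift 0)))))

lemma betaF_sat (a b i u : ATerm) (ρ : ℕ → ℕ) :
    (betaF a b i u).Sat ρ ↔ u.val ρ = a.val ρ % ((i.val ρ + 1) * b.val ρ + 1) := by
  simp only [betaF, AFml.Sat, ATerm.val, val_lift, consEnv]
  generalize a.val ρ = a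
  generalize u.val ρ = u
  generalize (i.val ρ + 1) * b.val ρ = d
  constructor
  · rintro ⟨h1, q, -, h3⟩
    rw [h3, Nat.mul_comm, Nat.mul_add_mod, Nat.mod_eq_of_lt (by omega)]
  · rintro rfl
    refine ⟨by have := Nat.mod_lt a (show 0 < d + 1 by omega); omega, a / (d + 1),
      Nat.div_le_self _ _, ?_⟩
    rw [Nat.mul_comm]
    exact (Nat.div_add_mod _ _).symm

lemma betaF_delta0 (a b i u : ATerm) : IsDelta0 (betaF a b i u) :=
  .and (.le _ _) (.bex _ (.eq _ _))

lemma betaF_freeLt (c : ℕ) (a b i u : ATerm) (ha : a.FreeLt c) (hb : b.FreeLt c)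
    (hi : i.FreeLt c) (hu : u.FreeLt c) : (betaF a b i u).FreeLt c := by
  simp [betaF, AFml.FreeLt, ATerm.FreeLt, ha, hb, hu, hi, term_lift_freeLt]

/-- With `b = var 0`, `a = var 1`, `s = var 2`, `x = var 3`: the sequence coded by `a, b`
witnesses that `s` is the code of the numeral of `x`. -/
def seqF : AFml :=
  .and (betaF (.var 1) (.var 0) .zero (numeral 2))
    (.and (betaF (.var 1) (.var 0) (.var 3) (.var 2))
      (.all (.imp (.le (.var 0) (ATerm.lift 0 (.var 3)))
        (.imp (.le (.succ (.var 0)) (.var 4))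
          (.ex (.and (.le (.var 0) (ATerm.lift 0 (.var 2)))
            (.ex (.and (.le (.var 0) (ATerm.lift 0 (.var 3)))
              (.and (betaF (.var 4) (.var 3) (.var 2) (.var 1))
                (.and (betaF (.var 4) (.var 3) (.succ (.var 2)) (.var 0))
                  (pairF (numeral 2) (.var 1) (.var 0))))))))))))

lemma seqF_delta0 : IsDelta0 seqF :=
  .and (betaF_delta0 _ _ _ _) (.and (betaF_delta0 _ _ _ _) (.ball _ (.imp (.le _ _)
    (.bex _ (.bex _ (.and (betaF_delta0 _ _ _ _) (.and (betaF_delta0 _ _ _ _)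
      (pairF_delta0 _ _ _))))))))

lemma seqF_freeLt : seqF.FreeLt 4 := by
  simp [seqF, AFml.FreeLt, ATerm.FreeLt, ATerm.lift]
  refine ⟨?_, ?_, ?_, ?_, ?_⟩ <;>
    first
    | (apply betaF_freeLt <;> simp [ATerm.FreeLt, numeral_freeLt])
    | (apply pairF_freeLt <;> simp [ATerm.FreeLt, numeral_freeLt])

lemma seqF_sat (b a s x : ℕ) (ρ : ℕ → ℕ) :
    seqF.Sat (consEnv b (consEnv a (consEnv s (consEnv x ρ)))) ↔
      2 = a % ((0 + 1) * b + 1) ∧ s = a % ((x + 1) * b + 1) ∧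
      ∀ i < x, a % ((i + 1 + 1) * b + 1) = Nat.pair 2 (a % ((i + 1) * b + 1)) := by
  simp only [seqF, AFml.Sat, ATerm.val, betaF_sat, pairF_sat, ATerm.lift, numeral_val]
  simp only [consEnv, Nat.not_lt_zero, if_false]
  refine and_congr Iff.rfl (and_congr Iff.rfl ?_)
  constructor
  · intro h i hi
    obtain ⟨u, -, w, -, rfl, rfl, h3⟩ := h i (by exact hi.le) hi
    exact h3
  · intro h i _ hi
    exact ⟨_, Nat.mod_le _ _, _, Nat.mod_le _ _, rfl, rfl, h i hi⟩

lemma numeral_code_zero : (numeral 0).code = 2 := by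
  simp [numeral, ATerm.code, Nat.pair]

lemma seqF_ex (s x : ℕ) (ρ : ℕ → ℕ) :
    (∃ a b, seqF.Sat (consEnv b (consEnv a (consEnv s (consEnv x ρ))))) ↔
      s = (numeral x).code := by
  simp only [seqF_sat]
  constructor
  · rintro ⟨a, b, h0, rfl, h⟩
    have : ∀ i ≤ x, a % ((i + 1) * b + 1) = (numeral i).code := by
      intro i
      induction i with
      | zero => intro _; rw [numeral_code_zero, ← h0]
      | succ i ih =>
        intro hi
        rw [h i (by omega), ih (by omega)]
        rfl
    exact this x le_rfl
  · rintro rfl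
    have hb : ∀ i ≤ x, Nat.beta (Nat.unbeta ((List.range (x + 1)).map fun j => (numeral j).code)) i
        = (numeral i).code := by
      intro i hi
      have := Nat.beta_unbeta_coe ((List.range (x + 1)).map fun j => (numeral j).code)
        ⟨i, by simp; omega⟩
      simpa using this
    generalize Nat.unbeta ((List.range (x + 1)).map fun j => (numeral j).code) = n at hb
    simp only [Nat.beta] at hb
    refine ⟨n.unpair.1, n.unpair.2, ?_, (hb x le_rfl).symm, ?_⟩
    · rw [hb 0 (by omega), numeral_code_zero]
    · intro i hi
      rw [hb (i + 1) (by omega), hb i (by omega)]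
      rfl

/-- The sentence `∀ y (y = n̄ → ψ(y))`. -/
def diagS (ψ : AFml) : AFml := .all (.imp (.eq (.var 0) (gnum ψ)) ψ)

lemma diagS_code (ψ : AFml) : (diagS ψ).code =
    Nat.pair 6 (Nat.pair 5 (Nat.pair (Nat.pair 0 (Nat.pair (Nat.pair 0 0)
      (numeral ψ.code).code)) ψ.code)) := rfl

/-- With `y = var 0` and `x = var 1`: `y` is the code of the diagonalization of the formula
with code `x`. -/
def diagF : AFml :=
  .ex (.ex (.ex (.ex (.ex (
    .and (pairF (numeral (Nat.pair 0 0)) (.var 4) (.var 3))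
    (.and (pairF (numeral 0) (.var 3) (.var 2))
    (.and (pairF (.var 2) (.var 6) (.var 1))
    (.and (pairF (numeral 5) (.var 1) (.var 0))
    (.and (pairF (numeral 6) (.var 0) (.var 5))
    (.ex (.ex (seqF.substAll fun n =>
      if n = 0 then .var 0 else if n = 1 then .var 1 else if n = 2 then .var 6
        else .var 8))))))))))))

lemma diagF_sigma1 : IsSigma1 diagF :=
  .ex (.ex (.ex (.ex (.ex (.and (.delta0 (pairF_delta0 _ _ _)) (.and (.delta0 (pairF_delta0 _ _ _))
    (.and (.delta0 (pairF_delta0 _ _ _)) (.and (.delta0 (pairF_delta0 _ _ _))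
    (.and (.delta0 (pairF_delta0 _ _ _))
    (.ex (.ex (.delta0 (delta0_subst seqF_delta0 _)))))))))))))

lemma diagF_freeLt : diagF.FreeLt 2 := by
  have : (seqF.substAll fun n =>
      if n = 0 then .var 0 else if n = 1 then .var 1 else if n = 2 then .var 6
        else .var 8).FreeLt 9 := by
    apply fml_subst_freeLt _ 4 _ seqF_freeLt
    intro n _
    split_ifs <;> simp [ATerm.FreeLt]
  simp [diagF, AFml.FreeLt, this]
  refine ⟨?_, ?_, ?_, ?_, ?_⟩ <;>
    first
    | (apply betaF_freeLt <;> simp [ATerm.FreeLt, numeral_freeLt])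
    | (apply pairF_freeLt <;> simp [ATerm.FreeLt, numeral_freeLt])

lemma diagF_sat (y x : ℕ) (ρ : ℕ → ℕ) :
    diagF.Sat (consEnv y (consEnv x ρ)) ↔
      y = Nat.pair 6 (Nat.pair 5 (Nat.pair (Nat.pair 0 (Nat.pair (Nat.pair 0 0)
        (numeral x).code)) x)) := by
  have key : ∀ b a c5 c4 c3 c2 s : ℕ, (seqF.substAll fun n =>
      if n = 0 then .var 0 else if n = 1 then .var 1 else if n = 2 then .var 6
        else .var 8).Sat (consEnv b (consEnv a (consEnv c5 (consEnv c4 (consEnv c3 (consEnv c2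
          (consEnv s (consEnv y (consEnv x ρ))))))))) ↔
      seqF.Sat (consEnv b (consEnv a (consEnv s (consEnv x fun _ => x)))) := by
    intro b a c5 c4 c3 c2 s
    rw [sat_subst]
    have e : (fun n => ATerm.val (consEnv b (consEnv a (consEnv c5 (consEnv c4 (consEnv c3
        (consEnv c2 (consEnv s (consEnv y (consEnv x ρ))))))))) (if n = 0 then .var 0 else if n = 1 then .var 1 else if n = 2 then .var 6
        else .var 8)) = (consEnv b (consEnv a (consEnv s (consEnv x fun _ => x)))) := by
      funext n
      match n with
      | 0 => rfl
      | 1 => rfl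
      | 2 => rfl
      | 3 => rfl
      | n + 4 => rfl
    rw [e]
  simp only [diagF, AFml.Sat, pairF_sat, ATerm.val, numeral_val, key, seqF_ex]
  simp only [consEnv]
  constructor
  · rintro ⟨s, _, _, _, _, rfl, rfl, rfl, rfl, rfl, rfl⟩
    rfl
  · rintro rfl
    exact ⟨_, _, _, _, _, rfl, rfl, rfl, rfl, rfl, rfl⟩

/-- The formula `∀ y (diag(x) = y → ¬ P(y))`. -/
def godF (P : AFml) : AFml := .all (.neg (.and diagF P))

/-- The Gödel sentence of `P`. -/
def godS (P : AFml) : AFml := diagS (godF P)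

lemma godS_pi1 {P : AFml} (h : IsSigma1 P) : IsPi1 (godS P) :=
  .all (.impSigmaPi (.delta0 (.eq _ _)) (.all (.negSigma (.and diagF_sigma1 h))))

lemma godS_closed {P : AFml} (h : P.FreeLt 1) : (godS P).FreeLt 0 := by
  simp [godS, diagS, godF, AFml.FreeLt, ATerm.FreeLt, gnum, numeral_freeLt, diagF_freeLt,
    fml_freeLt_mono P 1 2 h]

lemma appNum_true {P : AFml} (h : P.FreeLt 1) (φ : AFml) (ρ : ℕ → ℕ) :
    TrueN (P.appNum φ) ↔ P.Sat (consEnv φ.code ρ) := by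
  have e : P.appNum φ = P.substAll (fun n => numeral (consEnv φ.code ρ n)) := by
    apply fml_subst_congr P 1 h
    intro n hn
    obtain rfl : n = 0 := by omega
    rfl
  rw [TrueN, e, sat_subst]
  simp only [numeral_val]

lemma godS_true {P : AFml} (h : P.FreeLt 1) : TrueN (godS P) ↔ ¬ TrueN (P.appNum (godS P)) := by
  rw [appNum_true h _ (consEnv (godF P).code fun _ => 0), godS, diagS_code]
  simp only [TrueN, diagS, gnum, AFml.Sat, ATerm.val, numeral_val]
  simp only [consEnv, forall_eq]
  simp only [godF, AFml.Sat, diagF_sat]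
  simp

/-- The interpretation sending all variables to `φ`. -/
def interp (P φ : AFml) : MFml → AFml
  | .var _ => φ
  | .bot => botFml
  | .neg A => .neg (interp P φ A)
  | .and A B => .and (interp P φ A) (interp P φ B)
  | .or A B => .or (interp P φ A) (interp P φ B)
  | .imp A B => .imp (interp P φ A) (interp P φ B)
  | .box A => P.appNum (interp P φ A)

lemma interp_boxIter (P φ : AFml) (m : ℕ) :
    interp P φ (boxIter m (.var 0)) = iterPred P m φ := by
  induction m with
  | zero => rfl
  | succ m ih => simp [boxIter, interp, iterPred, ih]

lemma appNum_sigma1 {P : AFml} (h : IsSigma1 P) (φ : AFml) : IsSigma1 (P.appNum φ) :=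
  sigma1_subst h _

lemma appNum_closed {P : AFml} (h : P.FreeLt 1) (φ : AFml) : (P.appNum φ).FreeLt 0 := by
  apply fml_subst_freeLt P 1 0 h
  intro n hn
  obtain rfl : n = 0 := by omega
  exact numeral_freeLt _ _

/-- Suppose `T` is `Σ₁`-sound. For each `m ≥ 1`, there exists no `Σ₁`
provability predicate `PR_T(x)` of `T` such that `p → □ᵐp` belongs to `PL(PR_T)`. -/
theorem statement_5 (Tax : Set AFml) (hext : PA ⊆ Tax)
    (hcons : ¬ Proves Tax botFml) (hpr : PrAxiomatized Tax)
    (hsound : Sigma1Sound Tax)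
    (m : ℕ) (hm : 1 ≤ m) :
    ¬ ∃ P : AFml, IsSigma1 P ∧ IsProvPred Tax P ∧
        MFml.imp (.var 0) (boxIter m (.var 0)) ∈ PL Tax P := by
  rintro ⟨P, hP, ⟨hPc, hPp⟩, hPL⟩
  -- provability in `T` coincides with truth of `P`
  have hprov : ∀ φ, TrueN (P.appNum φ) → Proves Tax φ := fun φ h =>
    (hPp φ).2 (sigma1_true (appNum_sigma1 hP φ) (appNum_closed hPc φ) h)
  have htrue : ∀ φ, Proves Tax φ → TrueN (P.appNum φ) := fun φ h =>
    hsound _ (appNum_sigma1 hP φ) (appNum_closed hPc φ) (((hPp φ).1 h).mono hext)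
  have hiter : ∀ k φ, TrueN (iterPred P (k + 1) φ) → Proves Tax φ := by
    intro k
    induction k with
    | zero => exact fun φ h => hprov φ h
    | succ k ih =>
      intro φ h
      exact ih φ (hsound _ (appNum_sigma1 hP _) (appNum_closed hPc _) (hprov _ h))
  obtain ⟨k, rfl⟩ : ∃ k, m = k + 1 := ⟨m - 1, by omega⟩
  have hacc : ∀ φ : AFml, φ.FreeLt 0 → Proves Tax (.imp φ (iterPred P (k + 1) φ)) := by
    intro φ hφ
    have := hPL (interp P φ) ⟨fun _ => hφ, rfl, fun _ => rfl, fun _ _ => rfl, fun _ _ => rfl,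
      fun _ _ => rfl, fun _ => rfl⟩
    rw [← interp_boxIter]
    exact this
  -- `T` is complete
  have hcomplete : ∀ φ : AFml, φ.FreeLt 0 → Proves Tax φ ∨ Proves Tax (.neg φ) := by
    intro φ hφ
    have h1 : Proves Tax (.or (iterPred P (k + 1) φ) (iterPred P (k + 1) (.neg φ))) :=
      tc2 (hacc φ hφ) (hacc (.neg φ) hφ) fun v a b => by
        by_cases h : φ.evalProp v
        · exact .inl (a h)
        · exact .inr (b h)
    have h2 := hsound _ (.or (appNum_sigma1 hP _) (appNum_sigma1 hP _))
      ⟨appNum_closed hPc _, appNum_closed hPc _⟩ h1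
    exact h2.imp (hiter k φ) (hiter k (.neg φ))
  have hG := godS_true hPc
  have hGc := godS_closed hPc
  have hGs : IsSigma1 (.neg (godS P)) := .negPi (godS_pi1 hP)
  rcases hcomplete (godS P) hGc with h | h
  · have h1 : TrueN (.neg (godS P)) := fun h2 => hG.1 h2 (htrue _ h)
    have h2 := (sigma1_true hGs hGc h1).mono hext
    exact hcons (tc2 h h2 fun v a b => absurd a b)
  · have h1 : ¬ TrueN (godS P) := hsound _ hGs hGc h
    have h2 : Proves Tax (godS P) := hprov _ (not_not.mp fun h3 => h1 (hG.2 h3))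
    exact hcons (tc2 h2 h fun v a b => absurd a b)

end PLN
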